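/- Let p be a prime number with p > 3 and let n be a positive integer. Then the function f : ℝ → ℝ defined by f(x) = (sinh((p+1)x/p)/sinh(x)) · (sinh(x/p))^n/(sinh((p−1)x/p))^n for x ≠ 0, extended by continuity at x = 0, is not positive definite. -/

import Mathlib

open scoped ComplexOrder

/-- A function `φ : ℝ → ℂ` is positive definite if for every `n`, all real numbers
`x 1, …, x n` and complex numbers `c 1, …, c n`, the sum
`∑ i j, c i * conj (c j) * φ (x i - x j)` is a nonnegative real number. -/
def IsPosDefFun (φ : ℝ → ℂ) : Prop :=
  ∀ (n : ℕ) (x : Fin n → ℝ) (c : Fin n → ℂ),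
    0 ≤ ∑ i, ∑ j, c i * (starRingEnd ℂ) (c j) * φ (x i - x j)

/-!
If `φ` is smooth and positive definite, then so is minus its second derivative, the limit as `t → 0`
of the positive definite functions `t⁻² (2 φ(x) - φ(x + t) - φ(x - t))`. Hence
`(-1)ᵏ φ⁽²ᵏ⁾(0) ≥ 0` for all `k`. If moreover `φ` extends to a holomorphic function `G` on a disc
about `0`, these numbers are up to positive factors the coefficients of the power series in `y` of
`G(iy) + G(-iy)`, which is therefore nonnegative.

With `sinhc z = sinh z / z`, the function of the theorem is a positive multiple of
`sinhc (a z) / sinhc (d z) * (sinhc (b z) / sinhc (c z)) ^ n` with `b, c, d < a`. As `sinh (iy)` is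
`i sin y`, the factor `sinhc (a z)` is the first to vanish as `z` moves up the imaginary axis, at
`z = iπ / a`. Slightly above this point it is negative, while the quotient is still holomorphic and
its other factors are still positive.
-/

open Filter Topology
open scoped ContDiff

theorem tendsto_second_difference {E : Type*} [NormedAddCommGroup E] [NormedSpace ℝ E]
    {f : ℝ → E} (hf : ContDiff ℝ 2 f) (x : ℝ) :
    Tendsto (fun t => (t ^ 2)⁻¹ • (f (x + t) + f (x - t) - (2 : ℝ) • f x)) (𝓝[≠] 0)
      (𝓝 (iteratedDeriv 2 f x)) := by
  have taylor : Tendsto (fun y => ((y - x) ^ 2)⁻¹ • (f y - taylorWithinEval f 2 Set.univ x y))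
      (𝓝 x) (𝓝 0) := by
    simpa using taylor_tendsto convex_univ (Set.mem_univ x) hf.contDiffOn
  have expansion (y : ℝ) : taylorWithinEval f 2 Set.univ x y =
      f x + (y - x) • iteratedDeriv 1 f x + (2⁻¹ * (y - x) ^ 2) • iteratedDeriv 2 f x := by
    simp [iteratedDerivWithin_univ, one_add_one_eq_two]
  have right := taylor.comp (Continuous.tendsto' (f := fun t => x + t) (by fun_prop) 0 x (by simp))
  have left := taylor.comp (Continuous.tendsto' (f := fun t => x - t) (by fun_prop) 0 x (by simp))
  have hsum := ((right.add left).mono_left (nhdsWithin_le_nhds (s := {0}ᶜ))).add_const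
    (iteratedDeriv 2 f x)
  rw [add_zero, zero_add] at hsum
  refine hsum.congr' ?_
  filter_upwards [self_mem_nhdsWithin] with t (ht : t ≠ 0)
  have ht_inv : (t ^ 2)⁻¹ * t ^ 2 = 1 := inv_mul_cancel₀ (pow_ne_zero 2 ht)
  simp only [Function.comp_apply, expansion, add_sub_cancel_left, sub_sub_cancel_left]
  linear_combination (norm := module) -(ht_inv • iteratedDeriv 2 f x)

theorem iteratedDeriv_comp_ofReal {G : ℂ → ℂ} {x : ℝ} (hG : AnalyticAt ℂ G x) (m : ℕ) :
    iteratedDeriv m (fun t : ℝ => G t) x = iteratedDeriv m G x := by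
  induction m generalizing x with
  | zero => simp
  | succ m ih =>
    have hderiv : HasDerivAt (iteratedDeriv m G) (iteratedDeriv (m + 1) G x) x := by
      rw [iteratedDeriv_succ, iteratedDeriv_eq_iterate]
      exact (hG.iterated_deriv m).differentiableAt.hasDerivAt
    have heq : iteratedDeriv m (fun t : ℝ => G t) =ᶠ[𝓝 x] fun t : ℝ => iteratedDeriv m G t :=
      (Complex.continuous_ofReal.continuousAt.eventually hG.eventually_analyticAt).mono
        fun _ => ih
    rw [iteratedDeriv_succ, heq.deriv_eq, hderiv.comp_ofReal.deriv]

namespace IsPosDefFun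

variable {φ : ℝ → ℂ}

theorem sum_nonneg (h : IsPosDefFun φ) {ι : Type*} [Fintype ι] (x : ι → ℝ) (c : ι → ℂ) :
    0 ≤ ∑ i, ∑ j, c i * (starRingEnd ℂ) (c j) * φ (x i - x j) := by
  let e := (Fintype.equivFin ι).symm
  calc
    0 ≤ ∑ i, ∑ j, c (e i) * (starRingEnd ℂ) (c (e j)) * φ (x (e i) - x (e j)) :=
      h _ (x ∘ e) (c ∘ e)
    _ = ∑ i, ∑ j, c (e i) * (starRingEnd ℂ) (c j) * φ (x (e i) - x j) :=
      Finset.sum_congr rfl fun i _ =>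
        e.sum_comp fun j => c (e i) * (starRingEnd ℂ) (c j) * φ (x (e i) - x j)
    _ = _ := e.sum_comp fun i => ∑ j, c i * (starRingEnd ℂ) (c j) * φ (x i - x j)

theorem apply_zero_nonneg (h : IsPosDefFun φ) : 0 ≤ φ 0 := by
  simpa using h 1 0 1

theorem const_mul (h : IsPosDefFun φ) {a : ℂ} (ha : 0 ≤ a) : IsPosDefFun fun x => a * φ x := by
  intro n x c
  simpa only [Finset.mul_sum, mul_left_comm a] using mul_nonneg ha (h n x c)

theorem of_tendsto {ι : Type*} {l : Filter ι} [l.NeBot] {Φ : ι → ℝ → ℂ}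
    (h : ∀ᶠ t in l, IsPosDefFun (Φ t)) (hφ : ∀ x, Tendsto (fun t => Φ t x) l (𝓝 (φ x))) :
    IsPosDefFun φ := by
  intro n x c
  refine ge_of_tendsto (tendsto_finsetSum _ fun i _ => tendsto_finsetSum _ fun j _ =>
    (hφ (x i - x j)).const_mul _) ?_
  filter_upwards [h] with t ht using ht n x c

theorem neg_second_difference (h : IsPosDefFun φ) (t : ℝ) :
    IsPosDefFun fun x => -(φ (x + t) + φ (x - t) - 2 * φ x) := by
  intro n x c
  -- Duplicate the nodes: put the weights `c` at the `x i` and `-c` at the `x i + t`.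
  have hsum := h.sum_nonneg (Sum.elim x fun i => x i + t) (Sum.elim c fun i => -c i)
  simp only [Fintype.sum_sum_type, Sum.elim_inl, Sum.elim_inr, ← Finset.sum_add_distrib] at hsum
  convert hsum using 4 with i _ j _
  rw [add_sub_add_right_eq_sub, sub_add_eq_sub_sub, add_sub_right_comm, map_neg]
  ring

theorem neg_iteratedDeriv_two (h : IsPosDefFun φ) (hφ : ContDiff ℝ 2 φ) :
    IsPosDefFun fun x => -iteratedDeriv 2 φ x := by
  refine of_tendsto (l := 𝓝[≠] (0 : ℝ)) (Eventually.of_forall fun t =>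
    (h.neg_second_difference t).const_mul (a := ((t ^ 2)⁻¹ : ℝ)) ?_) fun x => ?_
  · exact Complex.zero_le_real.2 (by positivity)
  · simpa only [Complex.real_smul, Complex.ofReal_ofNat, ← mul_neg] using
      (tendsto_second_difference hφ x).neg

theorem iteratedDeriv_two_mul (h : IsPosDefFun φ) {k : ℕ} (hφ : ContDiff ℝ (2 * k : ℕ) φ) :
    IsPosDefFun fun x => (-1) ^ k * iteratedDeriv (2 * k) φ x := by
  induction k with
  | zero => simpa using h
  | succ k ih =>
    have hsmooth : ContDiff ℝ 2 (iteratedDeriv (2 * k) φ) := by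
      rw [iteratedDeriv_eq_iterate]
      exact ContDiff.iterate_deriv' 2 (2 * k) (hφ.of_le (by norm_cast; omega))
    have hneg := (ih (hφ.of_le (by norm_cast; omega))).neg_iteratedDeriv_two
      (contDiff_const.mul hsmooth)
    convert hneg using 2 with x
    simp [iteratedDeriv_succ, mul_add, pow_succ]

theorem add_apply_imaginary_nonneg (h : IsPosDefFun φ) (hφ : ContDiff ℝ ∞ φ)
    {G : ℂ → ℂ} {r y : ℝ} (hG : DifferentiableOn ℂ G (Metric.ball 0 r))
    (hφG : ∀ᶠ x : ℝ in 𝓝 0, φ x = G x) (hy : |y| < r) :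
    0 ≤ G (y * Complex.I) + G (-y * Complex.I) := by
  have hr : 0 < r := (abs_nonneg y).trans_lt hy
  have hderiv (m : ℕ) : iteratedDeriv m φ 0 = iteratedDeriv m G 0 := by
    have hG0 : AnalyticAt ℂ G (0 : ℝ) := by
      simpa using hG.analyticAt (Metric.ball_mem_nhds 0 hr)
    rw [EventuallyEq.iteratedDeriv_eq m hφG, iteratedDeriv_comp_ofReal hG0, Complex.ofReal_zero]
  have hup := Complex.hasSum_taylorSeries_on_ball hG (z := y * Complex.I) (by simpa using hy)
  have hdown := Complex.hasSum_taylorSeries_on_ball hG (z := -y * Complex.I) (by simpa using hy)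
  refine HasSum.nonneg (fun m => ?_) (hup.add hdown)
  simp only [sub_zero, smul_eq_mul, neg_mul, ← hderiv]
  rcases m.even_or_odd' with ⟨k, rfl | rfl⟩
  · have hk : 0 ≤ (-1) ^ k * iteratedDeriv (2 * k) φ 0 :=
      (h.iteratedDeriv_two_mul (contDiff_infty.1 hφ (2 * k))).apply_zero_nonneg
    have hcoeff : (0 : ℂ) ≤ (((2 * k).factorial : ℝ)⁻¹ * (y ^ 2) ^ k * 2 : ℝ) :=
      Complex.zero_le_real.2 (by positivity)
    convert mul_nonneg hcoeff hk using 1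
    rw [pow_mul, pow_mul, neg_sq, mul_pow, Complex.I_sq, mul_neg_one, neg_pow]
    push_cast
    ring
  · rw [(odd_two_mul_add_one k).neg_pow]
    exact le_of_eq (by ring)

end IsPosDefFun

theorem sinc_pos_of_abs_lt_pi {x : ℝ} (hx : |x| < Real.pi) : 0 < Real.sinc x := by
  wlog hpos : 0 < x generalizing x
  · rcases (not_lt.1 hpos).eq_or_lt with rfl | hneg
    · simp
    · rw [← Real.sinc_neg]
      exact this (by rwa [abs_neg]) (neg_pos.2 hneg)
  rw [Real.sinc_of_ne_zero hpos.ne']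
  exact div_pos (Real.sin_pos_of_pos_of_lt_pi hpos ((le_abs_self x).trans_lt hx)) hpos

theorem sinc_neg_of_mem_Ioo {x : ℝ} (hx : x ∈ Set.Ioo Real.pi (2 * Real.pi)) :
    Real.sinc x < 0 := by
  have hpos : 0 < x := Real.pi_pos.trans hx.1
  rw [Real.sinc_of_ne_zero hpos.ne', ← Real.sin_sub_two_pi]
  exact div_neg_of_neg_of_pos
    (Real.sin_neg_of_neg_of_neg_pi_lt (by linarith [hx.2]) (by linarith [hx.1])) hpos

/-- The entire function `sinh z / z`, with value `1` at `0`; defining it as a divided slope makes it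
holomorphic at `0` by the removable singularity theorem. -/
noncomputable def sinhc : ℂ → ℂ := dslope Complex.sinh 0

theorem sinhc_zero : sinhc 0 = 1 := by simp [sinhc]

theorem sinhc_of_ne_zero {z : ℂ} (hz : z ≠ 0) : sinhc z = Complex.sinh z / z := by
  simp [sinhc, dslope_of_ne _ hz, slope_def_field]

theorem mul_sinhc (z : ℂ) : z * sinhc z = Complex.sinh z := by
  simpa [sinhc] using sub_smul_dslope Complex.sinh 0 z

theorem differentiable_sinhc : Differentiable ℂ sinhc :=
  differentiableOn_univ.1 <| (Complex.differentiableOn_dslope univ_mem).2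
    Complex.differentiable_sinh.differentiableOn

theorem sinhc_mul_I (y : ℝ) : sinhc (y * Complex.I) = (Real.sinc y : ℂ) := by
  rcases eq_or_ne y 0 with rfl | hy
  · simp [sinhc_zero]
  · rw [sinhc_of_ne_zero (mul_ne_zero (mod_cast hy) Complex.I_ne_zero), Complex.sinh_mul_I,
      mul_div_mul_right _ _ Complex.I_ne_zero, Real.sinc_of_ne_zero hy]
    push_cast
    rfl

theorem exists_int_of_sinhc_eq_zero {z : ℂ} (hz : sinhc z = 0) :
    ∃ k : ℤ, k ≠ 0 ∧ z = k * Real.pi * Complex.I := by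
  have hsin : Complex.sin (z * Complex.I) = 0 := by
    rw [Complex.sin_mul_I, ← mul_sinhc, hz, mul_zero, zero_mul]
  obtain ⟨k, hk⟩ := Complex.sin_eq_zero_iff.1 hsin
  have hzk : z = -k * Real.pi * Complex.I := by
    linear_combination (-Complex.I) * hk + z * Complex.I_mul_I
  refine ⟨-k, fun hk0 => ?_, by exact_mod_cast hzk⟩
  simp [hzk, neg_eq_zero.1 hk0, sinhc_zero] at hz

theorem sinhc_ofReal_ne_zero (x : ℝ) : sinhc x ≠ 0 := by
  intro hx
  obtain ⟨k, hk, hxk⟩ := exists_int_of_sinhc_eq_zero hx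
  simpa [hk, Real.pi_ne_zero] using congrArg Complex.im hxk

theorem sinhc_ne_zero_of_norm_lt_pi {z : ℂ} (hz : ‖z‖ < Real.pi) : sinhc z ≠ 0 := by
  intro h0
  obtain ⟨k, hk, rfl⟩ := exists_int_of_sinhc_eq_zero h0
  have hk1 : (1 : ℝ) ≤ |(k : ℝ)| := mod_cast Int.one_le_abs hk
  refine hz.not_ge ?_
  simpa [abs_of_pos Real.pi_pos] using le_mul_of_one_le_left Real.pi_pos.le hk1

section SinhcQuotient

/-- The quotient `sinhc (a z) / sinhc (d z) * (sinhc (b z) / sinhc (c z)) ^ n`, the normalization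
with value `1` at `0` of `sinh (a z) / sinh (d z) * (sinh (b z) / sinh (c z)) ^ n`. -/
noncomputable def sinhcQuotient (a b c d : ℝ) (n : ℕ) (z : ℂ) : ℂ :=
  sinhc (a * z) / sinhc (d * z) * (sinhc (b * z) / sinhc (c * z)) ^ n

variable {a b c d : ℝ}

theorem sinhcQuotient_zero (a b c d : ℝ) (n : ℕ) : sinhcQuotient a b c d n 0 = 1 := by
  simp [sinhcQuotient, sinhc_zero]

theorem sinh_div_sinh_eq_mul_sinhc_div_sinhc (a b : ℝ) {z : ℂ} (hz : z ≠ 0) :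
    Complex.sinh (a * z) / Complex.sinh (b * z) = a / b * (sinhc (a * z) / sinhc (b * z)) := by
  rw [← mul_sinhc, ← mul_sinhc, mul_div_mul_comm, mul_div_mul_right _ _ hz]

theorem sinh_quotient_eq_const_mul_sinhcQuotient (a b c d : ℝ) (n : ℕ) {z : ℂ} (hz : z ≠ 0) :
    Complex.sinh (a * z) / Complex.sinh (d * z) *
        (Complex.sinh (b * z) ^ n / Complex.sinh (c * z) ^ n) =
      a / d * (b / c) ^ n * sinhcQuotient a b c d n z := by
  rw [← div_pow, sinh_div_sinh_eq_mul_sinhc_div_sinhc a d hz,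
    sinh_div_sinh_eq_mul_sinhc_div_sinhc b c hz, sinhcQuotient]
  ring

theorem contDiff_sinhcQuotient (a b c d : ℝ) (n : ℕ) :
    ContDiff ℝ ∞ fun x : ℝ => sinhcQuotient a b c d n x := by
  have smooth (s : ℝ) : ContDiff ℝ ∞ fun x : ℝ => sinhc (s * x) :=
    (differentiable_sinhc.contDiff.restrict_scalars ℝ).comp
      (contDiff_const.mul Complex.ofRealCLM.contDiff)
  have ne_zero (s x : ℝ) : sinhc (s * x) ≠ 0 := by
    exact_mod_cast sinhc_ofReal_ne_zero (s * x)
  have smooth_div (s t : ℝ) : ContDiff ℝ ∞ fun x : ℝ => sinhc (s * x) / sinhc (t * x) := by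
    simp only [div_eq_mul_inv]
    exact (smooth s).mul ((smooth t).inv (ne_zero t))
  exact (smooth_div a d).mul ((smooth_div b c).pow n)

theorem differentiableOn_sinhcQuotient (a b : ℝ) (n : ℕ) {r : ℝ} (hc : |c| * r ≤ Real.pi)
    (hd : |d| * r ≤ Real.pi) :
    DifferentiableOn ℂ (sinhcQuotient a b c d n) (Metric.ball 0 r) := by
  have diff (s : ℝ) : DifferentiableOn ℂ (fun z => sinhc (s * z)) (Metric.ball 0 r) :=
    (differentiable_sinhc.comp (differentiable_id.const_mul _)).differentiableOn
  have ne_zero {s : ℝ} (hs : |s| * r ≤ Real.pi) (z : ℂ) (hz : z ∈ Metric.ball 0 r) :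
      sinhc (s * z) ≠ 0 := by
    rcases eq_or_ne s 0 with rfl | hs0
    · simp [sinhc_zero]
    refine sinhc_ne_zero_of_norm_lt_pi (lt_of_lt_of_le ?_ hs)
    rw [norm_mul, Complex.norm_real, Real.norm_eq_abs]
    exact mul_lt_mul_of_pos_left (mem_ball_zero_iff.1 hz) (abs_pos.2 hs0)
  exact ((diff a).div (diff d) (ne_zero hd)).mul (((diff b).div (diff c) (ne_zero hc)).pow n)

theorem sinhcQuotient_mul_I (a b c d : ℝ) (n : ℕ) (y : ℝ) :
    sinhcQuotient a b c d n (y * Complex.I) =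
      (Real.sinc (a * y) / Real.sinc (d * y) *
        (Real.sinc (b * y) / Real.sinc (c * y)) ^ n : ℝ) := by
  have eval (s : ℝ) : sinhc (s * (y * Complex.I)) = (Real.sinc (s * y) : ℂ) := by
    rw [← sinhc_mul_I, Complex.ofReal_mul, mul_assoc]
  simp only [sinhcQuotient, eval]
  push_cast
  rfl

theorem exists_pi_lt_mul_and_abs_mul_lt_pi (hb : |b| < a) (hc : |c| < a) (hd : |d| < a) :
    ∃ r, Real.pi < a * r ∧ a * r < 2 * Real.pi ∧
      |b| * r < Real.pi ∧ |c| * r < Real.pi ∧ |d| * r < Real.pi := by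
  have ha : 0 < a := (abs_nonneg b).trans_lt hb
  have near {s m : ℝ} (h : s * (Real.pi / a) < m) : ∀ᶠ r in 𝓝[>] (Real.pi / a), s * r < m :=
    (continuous_const_mul s).continuousWithinAt.eventually_lt_const h
  have lt_pi {s : ℝ} (hs : |s| < a) : |s| * (Real.pi / a) < Real.pi :=
    (mul_lt_mul_of_pos_right hs (div_pos Real.pi_pos ha)).trans_eq (mul_div_cancel₀ _ ha.ne')
  have lt_two_pi : a * (Real.pi / a) < 2 * Real.pi := by
    rw [mul_div_cancel₀ _ ha.ne']
    linarith [Real.pi_pos]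
  obtain ⟨r, hr, hrs⟩ := (eventually_mem_nhdsWithin.and ((near lt_two_pi).and
    ((near (lt_pi hb)).and ((near (lt_pi hc)).and (near (lt_pi hd)))))).exists
  exact ⟨r, (div_lt_iff₀' ha).1 hr, hrs⟩

theorem not_isPosDefFun_sinhcQuotient (n : ℕ) (hb : |b| < a) (hc : |c| < a) (hd : |d| < a) :
    ¬ IsPosDefFun fun x => sinhcQuotient a b c d n x := by
  intro h
  have ha : 0 < a := (abs_nonneg b).trans_lt hb
  obtain ⟨r, hpi_r, hr_two_pi, hbr, hcr, hdr⟩ := exists_pi_lt_mul_and_abs_mul_lt_pi hb hc hd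
  obtain ⟨y, hpi_y, hyr⟩ := exists_between ((div_lt_iff₀' ha).2 hpi_r)
  have hy : 0 < y := (div_pos Real.pi_pos ha).trans hpi_y
  have hnonneg := h.add_apply_imaginary_nonneg (contDiff_sinhcQuotient a b c d n)
    (differentiableOn_sinhcQuotient a b n hcr.le hdr.le) (Eventually.of_forall fun _ => rfl)
    ((abs_of_pos hy).trans_lt hyr)
  simp only [← Complex.ofReal_neg, sinhcQuotient_mul_I, mul_neg, Real.sinc_neg,
    ← Complex.ofReal_add, Complex.zero_le_real] at hnonneg
  have sinc_pos {s : ℝ} (hs : |s| * r < Real.pi) : 0 < Real.sinc (s * y) := by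
    refine sinc_pos_of_abs_lt_pi (lt_of_le_of_lt ?_ hs)
    rw [abs_mul, abs_of_pos hy]
    gcongr
  have sinc_neg : Real.sinc (a * y) < 0 :=
    sinc_neg_of_mem_Ioo ⟨(div_lt_iff₀' ha).1 hpi_y, (mul_lt_mul_of_pos_left hyr ha).trans hr_two_pi⟩
  have hneg : Real.sinc (a * y) / Real.sinc (d * y) *
      (Real.sinc (b * y) / Real.sinc (c * y)) ^ n < 0 :=
    mul_neg_of_neg_of_pos (div_neg_of_neg_of_pos sinc_neg (sinc_pos hdr))
      (pow_pos (div_pos (sinc_pos hbr) (sinc_pos hcr)) n)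
  linarith

theorem not_isPosDefFun_sinh_quotient (hb : b ∈ Set.Ioo 0 a) (hc : c ∈ Set.Ioo 0 a)
    (hd : d ∈ Set.Ioo 0 a) (n : ℕ) (f : ℝ → ℝ)
    (hf : ∀ x : ℝ, x ≠ 0 → f x = Real.sinh (a * x) / Real.sinh (d * x) *
      (Real.sinh (b * x) ^ n / Real.sinh (c * x) ^ n))
    (hf0 : f 0 = a / d * (b / c) ^ n) :
    ¬ IsPosDefFun fun x => ((f x : ℝ) : ℂ) := by
  intro h
  have abs_lt {s : ℝ} (hs : s ∈ Set.Ioo 0 a) : |s| < a := (abs_of_pos hs.1).trans_lt hs.2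
  have hK : 0 < a / d * (b / c) ^ n :=
    mul_pos (div_pos (hd.1.trans hd.2) hd.1) (pow_pos (div_pos hb.1 hc.1) n)
  set K := a / d * (b / c) ^ n with hK_def
  have hfQ (x : ℝ) : (f x : ℂ) = K * sinhcQuotient a b c d n x := by
    rcases eq_or_ne x 0 with rfl | hx
    · rw [hf0, Complex.ofReal_zero, sinhcQuotient_zero, mul_one]
    · rw [hf x hx, hK_def]
      push_cast
      exact sinh_quotient_eq_const_mul_sinhcQuotient a b c d n (mod_cast hx)
  refine not_isPosDefFun_sinhcQuotient n (abs_lt hb) (abs_lt hc) (abs_lt hd) ?_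
  have hK0 : (K : ℂ) ≠ 0 := mod_cast hK.ne'
  simpa only [hfQ, Complex.ofReal_inv, inv_mul_cancel_left₀ hK0] using
    h.const_mul (Complex.zero_le_real.2 (inv_nonneg.2 hK.le))

end SinhcQuotient

theorem sinh_prime_quotient_not_posdef_general {p : ℝ} (hp : 1 < p) (n : ℕ) (f : ℝ → ℝ)
    (hf : ∀ x : ℝ, x ≠ 0 →
      f x = Real.sinh ((p + 1) * x / p) / Real.sinh x *
        (Real.sinh (x / p) ^ n / Real.sinh ((p - 1) * x / p) ^ n))
    (hf0 : f 0 = (p + 1) / p * (1 / (p - 1)) ^ n) :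
    ¬ IsPosDefFun fun x => ((f x : ℝ) : ℂ) := by
  have hp0 : 0 < p := one_pos.trans hp
  refine not_isPosDefFun_sinh_quotient (a := (p + 1) / p) (b := 1 / p) (c := (p - 1) / p) (d := 1)
    ⟨by positivity, by gcongr; linarith⟩
    ⟨div_pos (sub_pos.2 hp) hp0, by gcongr; linarith⟩
    ⟨one_pos, (one_lt_div hp0).2 (by linarith)⟩ n f (fun x hx => ?_) ?_
  · rw [hf x hx, div_mul_eq_mul_div _ p, div_mul_eq_mul_div _ p, div_mul_eq_mul_div _ p, one_mul]
  · rw [hf0, div_one, div_div_div_cancel_right₀ hp0.ne']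

theorem sinh_prime_quotient_not_posdef (p : ℕ) (hp : p.Prime) (hp3 : 3 < p)
    (n : ℕ) (hn : 0 < n) (f : ℝ → ℝ)
    (hf : ∀ x : ℝ, x ≠ 0 →
      f x = Real.sinh ((p + 1) * x / p) / Real.sinh x *
        (Real.sinh (x / p) ^ n / Real.sinh ((p - 1) * x / p) ^ n))
    (hf0 : f 0 = (p + 1) / p * (1 / (p - 1)) ^ n) :
    ¬ IsPosDefFun fun x => ((f x : ℝ) : ℂ) :=
  sinh_prime_quotient_not_posdef_general (mod_cast hp.one_lt) n f hf hf0
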